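/- Let q be a real number with 0 < q and q ≠ 1, let h₁, h₂, l₁, α₁, λ be real numbers and t₁, t₂ nonzero reals. Assume λ + α₁ = -N for some positive integer N (so (q^{λ+α₁};q)_n = 0 for all n > N and the series below is a finite sum), and assume q^{h₁-l₁+k} ≠ 1 for all integers 1 ≤ k ≤ N. Then the function g(x) = x^{-α₁} · Σ_{n=0}^{N} (q^{h₁+1/2}t₁/x;q)_n · (q^{λ+α₁};q)_n · q^n · Σ_{k=0}^{n} q^{k²} · (q^{λ+α₁+h₁-h₂}·t₁/t₂)^k / ((q^{h₁-l₁+1};q)_k (q;q)_k (q;q)_{n-k}) satisfies the variant of the confluent q-hypergeometric equation of type (1,2) for all x > 0. -/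

import Mathlib

/-- The finite q-shifted factorial `(a;q)_n = ∏_{i=0}^{n-1} (1 - a q^i)`. -/
noncomputable def qPoch (q a : ℝ) (n : ℕ) : ℝ :=
  ∏ i ∈ Finset.range n, (1 - a * q ^ i)

/-- The variant of the confluent q-hypergeometric equation of type (1,2) (for `x > 0`). -/
def confEq12 (q h₁ h₂ l₁ α₁ lam t₁ t₂ : ℝ) (g : ℝ → ℝ) : Prop :=
  ∀ x : ℝ, 0 < x →
    q ^ (h₁ + h₂ - l₁ - 2 * lam + 1/2) * t₂ * (q ^ (l₁ - 1/2) * t₁ - x) * g (q * x)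
    + (x - q ^ (h₁ + 1/2) * t₁) * (x - q ^ (h₂ + 1/2) * t₂) * g (x / q)
    - (q ^ α₁ * x ^ 2
        - q ^ (h₁ + h₂ - lam + 1/2) * (q ^ (-h₂) * t₁ + q ^ (-h₁) * t₂ + q ^ (-l₁) * t₂) * x
        + q ^ (h₁ + h₂ - lam) * (q + 1) * t₁ * t₂) * g x = 0

lemma qPoch_zero' (q a : ℝ) : qPoch q a 0 = 1 := by simp [qPoch]

lemma qPoch_succ' (q a : ℝ) (n : ℕ) : qPoch q a (n + 1) = qPoch q a n * (1 - a * q ^ n) := by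
  simp [qPoch, Finset.prod_range_succ]

lemma qPoch_up (q y : ℝ) (n : ℕ) : (1 - y) * qPoch q (y * q) n = qPoch q y (n + 1) := by
  simp only [qPoch, Finset.prod_range_succ', pow_zero, mul_one]
  rw [mul_comm]
  congr 1
  apply Finset.prod_congr rfl
  intro i _
  ring

lemma qPoch_down (q y : ℝ) (hq : q ≠ 0) (n : ℕ) :
    qPoch q (y / q) (n + 1) = (1 - y / q) * qPoch q y n := by
  rw [← qPoch_up, div_mul_cancel₀ _ hq]

/-- inner summand -/
noncomputable def fC (q C z : ℝ) (k : ℕ) : ℝ :=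
  q ^ (k ^ 2) * z ^ k / (qPoch q (C * q) k * qPoch q q k)

/-- inner sum -/
noncomputable def aC (q C z : ℝ) (n : ℕ) : ℝ :=
  ∑ k ∈ Finset.range (n + 1), fC q C z k * (qPoch q q (n - k))⁻¹

lemma one_sub_pow_ne (q : ℝ) (hq : 0 < q) (hq1 : q ≠ 1) (n : ℕ) : 1 - q * q ^ n ≠ 0 := by
  intro h
  have : q ^ (n + 1) = 1 := by rw [pow_succ]; linarith
  exact hq1 ((pow_eq_one_iff_of_nonneg hq.le (by omega)).1 this)

lemma qPoch_q_ne (q : ℝ) (hq : 0 < q) (hq1 : q ≠ 1) (n : ℕ) : qPoch q q n ≠ 0 :=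
  Finset.prod_ne_zero_iff.2 fun i _ => one_sub_pow_ne q hq hq1 i

lemma e_step (q : ℝ) (hq : 0 < q) (hq1 : q ≠ 1) (n : ℕ) :
    (qPoch q q n)⁻¹ = (1 - q ^ (n + 1)) * (qPoch q q (n + 1))⁻¹ := by
  have h1 := qPoch_q_ne q hq hq1 n
  have h2 := one_sub_pow_ne q hq hq1 n
  rw [qPoch_succ', mul_inv, pow_succ' q n]
  field_simp

lemma f_step (q C z : ℝ) (hq : 0 < q) (hq1 : q ≠ 1) (k : ℕ) (hC : 1 - C * q ^ (k + 1) ≠ 0) :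
    (1 - q ^ (k + 1)) * (1 - C * q ^ (k + 1)) * fC q C z (k + 1)
      = z * q ^ (2 * k + 1) * fC q C z k := by
  have h2 := one_sub_pow_ne q hq hq1 k
  unfold fC
  rw [qPoch_succ', qPoch_succ']
  have e : 1 - C * q * q ^ k ≠ 0 := by
    intro h; apply hC; rw [← h]; ring
  have e1 : (1 - q ^ (k + 1)) = 1 - q * q ^ k := by ring
  have e2 : (1 - C * q ^ (k + 1)) = 1 - C * q * q ^ k := by ring
  rw [e1, e2]
  by_cases hz : qPoch q (C * q) k = 0
  · simp [hz]
  have h1 := qPoch_q_ne q hq hq1 k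
  generalize qPoch q (C * q) k = P1 at *
  generalize qPoch q q k = P2 at *
  generalize 1 - C * q * q ^ k = D at *
  generalize 1 - q * q ^ k = E at *
  field_simp
  ring

lemma aC_one (q C z : ℝ) (n : ℕ) (hq : 0 < q) (hq1 : q ≠ 1) :
    aC q C z n = ∑ k ∈ Finset.range (n + 2),
      fC q C z k * ((1 - q ^ (n + 1 - k)) * (qPoch q q (n + 1 - k))⁻¹) := by
  rw [Finset.sum_range_succ]
  simp only [Nat.sub_self, pow_zero, sub_self, zero_mul, mul_zero, add_zero]
  apply Finset.sum_congr rfl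
  intro k hk
  have hk' := Finset.mem_range.1 hk
  rw [e_step q hq hq1 (n - k), show n + 1 - k = n - k + 1 by omega]

lemma aC_two (q C z : ℝ) (n : ℕ) (hq : 0 < q) (hq1 : q ≠ 1) :
    q * aC q C z n = ∑ k ∈ Finset.range (n + 3),
      fC q C z k * ((q - q ^ (n + 2 - k)) * (1 - q ^ (n + 2 - k)) * (qPoch q q (n + 2 - k))⁻¹) := by
  rw [Finset.sum_range_succ]
  simp only [Nat.sub_self, pow_zero, sub_self, zero_mul, mul_zero, add_zero]
  rw [aC_one q C z n hq hq1, Finset.mul_sum]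
  apply Finset.sum_congr rfl
  intro k hk
  have hk' := Finset.mem_range.1 hk
  rw [e_step q hq hq1 (n + 1 - k), show n + 2 - k = n + 1 - k + 1 by omega]
  ring

lemma aC_rec (q C z : ℝ) (n : ℕ) (hq : 0 < q) (hq1 : q ≠ 1)
    (hC : ∀ k, k < n + 2 → 1 - C * q ^ (k + 1) ≠ 0) :
    (1 - q ^ (n + 2)) * (1 - C * q ^ (n + 2)) * aC q C z (n + 2)
      = ((1 + q) - (1 + C) * q ^ (n + 2) + z * q ^ (2 * n + 3)) * aC q C z (n + 1)
        - q * aC q C z n := by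
  have hz : z * q ^ (2 * n + 3) * aC q C z (n + 1) = ∑ k ∈ Finset.range (n + 3),
      fC q C z k * ((q ^ (n + 2 - k)) ^ 2 * (1 - q ^ k) * (1 - C * q ^ k)
        * (qPoch q q (n + 2 - k))⁻¹) := by
    rw [Finset.sum_range_succ']
    simp only [pow_zero, sub_self, zero_mul, mul_zero, add_zero]
    unfold aC
    rw [Finset.mul_sum]
    apply Finset.sum_congr rfl
    intro k hk
    have hk' := Finset.mem_range.1 hk
    have := f_step q C z hq hq1 k (hC k hk')
    rw [show n + 2 - (k + 1) = n + 1 - k by omega]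
    have e : q ^ (2 * n + 3) = q ^ (2 * k + 1) * (q ^ (n + 1 - k)) ^ 2 := by
      rw [← pow_mul, ← pow_add]; congr 1; omega
    rw [e]
    linear_combination (-(q ^ (n + 1 - k)) ^ 2 * (qPoch q q (n + 1 - k))⁻¹) * this
  have h0 : aC q C z (n + 2) = ∑ k ∈ Finset.range (n + 3),
      fC q C z k * (qPoch q q (n + 2 - k))⁻¹ := rfl
  have h1 := aC_one q C z (n + 1) hq hq1
  have key : (1 - q ^ (n + 2)) * (1 - C * q ^ (n + 2)) * aC q C z (n + 2)
      - ((1 + q) - (1 + C) * q ^ (n + 2)) * aC q C z (n + 1)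
      - z * q ^ (2 * n + 3) * aC q C z (n + 1) + q * aC q C z n = 0 := by
    rw [hz, aC_two q C z n hq hq1, h0, h1, Finset.mul_sum, Finset.mul_sum,
      ← Finset.sum_sub_distrib, ← Finset.sum_sub_distrib, ← Finset.sum_add_distrib]
    apply Finset.sum_eq_zero
    intro k hk
    have hk' := Finset.mem_range.1 hk
    have e : q ^ (n + 2) = q ^ k * q ^ (n + 2 - k) := by
      rw [← pow_add]; congr 1; omega
    rw [e, show n + 1 + 1 - k = n + 2 - k by omega]
    ring
  linear_combination key

lemma aC_at_zero (q C z : ℝ) : aC q C z 0 = 1 := by simp [aC, fC, qPoch]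

lemma aC_rec_one (q C z : ℝ) (hq : 0 < q) (hq1 : q ≠ 1) (hC : 1 - C * q ≠ 0) :
    (1 - q) * (1 - C * q) * aC q C z 1 = 1 - C * q + z * q := by
  have h2 := one_sub_pow_ne q hq hq1 0
  simp only [pow_zero, mul_one] at h2
  simp [aC, fC, qPoch, Finset.sum_range_succ]
  generalize hD : 1 - C * q = D at *
  field_simp

/-- reduced operator -/
noncomputable def Lop (q β C c y F1 F2 F0 : ℝ) : ℝ :=
  β / c ^ 2 * (y ^ 2 / q - C * y) * F1 + (1 - y) * (1 - β * y) * F2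
    - (1 - (1 + β + C * β) / c * y + (1 + 1 / q) * β / c * y ^ 2) * F0

noncomputable def pC (q β C c : ℝ) (u : ℝ) : ℝ := β / c ^ 2 * (1 - 1 / u) * (1 / u - C)
noncomputable def sC (q β c : ℝ) (u : ℝ) : ℝ :=
  - β * (1 - c * u) * (1 - c * q * u) / (c ^ 2 * u ^ 2 * q)
noncomputable def rC (q β C c : ℝ) (u : ℝ) : ℝ :=
  (1 - c * u) / c * (1 + β / (c * u ^ 2) * (1 + 1 / q - (1 + C) * u))

lemma Lop_phi (q β C c y : ℝ) (hq : q ≠ 0) (hc : c ≠ 0) (n : ℕ) :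
    Lop q β C c y (qPoch q (y / q) (n + 1)) (qPoch q (y * q) (n + 1)) (qPoch q y (n + 1))
      = y * (pC q β C c (q ^ (n + 1)) * qPoch q y n + rC q β C c (q ^ (n + 1)) * qPoch q y (n + 1)
        + sC q β c (q ^ (n + 1)) * qPoch q y (n + 2)) := by
  have h2 := qPoch_up q y (n + 1)
  have hu : q ^ n ≠ 0 := pow_ne_zero _ hq
  unfold Lop
  rw [mul_right_comm (1 - y), h2, qPoch_down q y hq n, qPoch_succ' q y (n + 1), qPoch_succ' q y n,
    pow_succ q n]
  generalize q ^ n = u at *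
  generalize qPoch q y n = P
  unfold pC rC sC
  field_simp
  ring

lemma Lop_phi_zero (q β C c y : ℝ) (hq : q ≠ 0) (hc : c ≠ 0) :
    Lop q β C c y (qPoch q (y / q) 0) (qPoch q (y * q) 0) (qPoch q y 0)
      = y * (rC q β C c 1 + sC q β c 1 * qPoch q y 1) := by
  simp [Lop, rC, sC, qPoch]
  field_simp
  ring

noncomputable def bC (q C c z : ℝ) (n : ℕ) : ℝ := qPoch q c n * q ^ n * aC q C z n

lemma bC_rec (q β C c : ℝ) (n : ℕ) (hq : 0 < q) (hq1 : q ≠ 1) (hc : c ≠ 0) (hβ : β ≠ 0)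
    (hC : ∀ k, k < n + 2 → 1 - C * q ^ (k + 1) ≠ 0) :
    sC q β c (q ^ n) * bC q C c (c / β) n + rC q β C c (q ^ (n + 1)) * bC q C c (c / β) (n + 1)
      + pC q β C c (q ^ (n + 2)) * bC q C c (c / β) (n + 2) = 0 := by
  have h := aC_rec q C (c / β) n hq hq1 hC
  have hu : q ^ n ≠ 0 := pow_ne_zero _ hq.ne'
  unfold bC
  rw [qPoch_succ' q c (n + 1), qPoch_succ' q c n]
  have e1 : q ^ (n + 1) = q ^ n * q := pow_succ _ _
  have e2 : q ^ (n + 2) = q ^ n * q ^ 2 := pow_add _ _ _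
  have e3 : q ^ (2 * n + 3) = (q ^ n) ^ 2 * q ^ 3 := by rw [pow_add, mul_comm 2 n, pow_mul]
  rw [e2, e3] at h
  rw [e1, e2]
  generalize q ^ n = u at *
  generalize qPoch q c n = P
  have hq' := hq.ne'
  unfold pC rC sC
  generalize aC q C (c / β) n = a0 at *
  generalize aC q C (c / β) (n + 1) = a1 at *
  generalize aC q C (c / β) (n + 2) = a2 at *
  have := congrArg
    (fun t => -β / c ^ 2 * P * (1 - c * u) * (1 - c * (u * q)) / (u * q ^ 2) * t) h
  beta_reduce at this
  rw [← sub_eq_zero] at this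
  rw [← this]
  field_simp
  ring

lemma bC_rec_one (q β C c : ℝ) (hq : 0 < q) (hq1 : q ≠ 1) (hc : c ≠ 0) (hβ : β ≠ 0)
    (hC : 1 - C * q ≠ 0) :
    rC q β C c 1 * bC q C c (c / β) 0 + pC q β C c q * bC q C c (c / β) 1 = 0 := by
  have h := aC_rec_one q C (c / β) hq hq1 hC
  unfold bC
  rw [aC_at_zero]
  simp only [qPoch, Finset.prod_range_zero, Finset.prod_range_one, pow_zero, pow_one, mul_one]
  generalize aC q C (c / β) 1 = a1 at *
  have hq' := hq.ne'
  have := congrArg (fun t => -β / c ^ 2 * (1 - c) / q * t) h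
  beta_reduce at this
  rw [← sub_eq_zero] at this
  rw [← this]
  unfold pC rC
  field_simp
  ring

lemma partial_sum (q β C c y : ℝ) (N : ℕ) (hq : 0 < q) (hq1 : q ≠ 1) (hc : c ≠ 0) (hβ : β ≠ 0)
    (hC : ∀ k, k < N → 1 - C * q ^ (k + 1) ≠ 0) (M : ℕ) (hM : M < N) :
    ∑ n ∈ Finset.range (M + 1), bC q C c (c / β) n *
      Lop q β C c y (qPoch q (y / q) n) (qPoch q (y * q) n) (qPoch q y n)
    = y * (sC q β c (q ^ M) * bC q C c (c / β) M * qPoch q y (M + 1)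
        - pC q β C c (q ^ (M + 1)) * bC q C c (c / β) (M + 1) * qPoch q y M) := by
  induction M with
  | zero =>
    have h := bC_rec_one q β C c hq hq1 hc hβ (by simpa using hC 0 hM)
    rw [zero_add, Finset.sum_range_one, Lop_phi_zero q β C c y hq.ne' hc, qPoch_zero',
      pow_zero, pow_one]
    linear_combination y * h
  | succ M ih =>
    have h := bC_rec q β C c M hq hq1 hc hβ (fun k hk => hC k (by omega))
    rw [Finset.sum_range_succ, ih (by omega), Lop_phi q β C c y hq.ne' hc]
    linear_combination y * qPoch q y (M + 1) * h

lemma full_sum (q β C c y : ℝ) (N : ℕ) (hN : 0 < N) (hq : 0 < q) (hq1 : q ≠ 1) (hc : c ≠ 0)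
    (hβ : β ≠ 0) (hC : ∀ k, k < N → 1 - C * q ^ (k + 1) ≠ 0) (hcN : c * q ^ N = 1) :
    ∑ n ∈ Finset.range (N + 1), bC q C c (c / β) n *
      Lop q β C c y (qPoch q (y / q) n) (qPoch q (y * q) n) (qPoch q y n) = 0 := by
  obtain ⟨M, rfl⟩ : ∃ M, N = M + 1 := ⟨N - 1, by omega⟩
  rw [Finset.sum_range_succ, partial_sum q β C c y (M + 1) hq hq1 hc hβ hC M (by omega),
    Lop_phi q β C c y hq.ne' hc]
  have r0 : rC q β C c (q ^ (M + 1)) = 0 := by unfold rC; rw [hcN]; simp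
  have s0 : sC q β c (q ^ (M + 1)) = 0 := by unfold sC; rw [hcN]; simp
  have s1 : sC q β c (q ^ M) = 0 := by
    unfold sC
    rw [show c * q * q ^ M = 1 by rw [← hcN]; ring]; simp
  rw [r0, s0, s1]
  ring

theorem stmt4 (q h₁ h₂ l₁ α₁ lam t₁ t₂ : ℝ) (N : ℕ)
    (hq : 0 < q) (hq1 : q ≠ 1) (ht₁ : t₁ ≠ 0) (ht₂ : t₂ ≠ 0)
    (hN : 0 < N) (hNlam : lam + α₁ = -(N : ℝ))
    (hden : ∀ k : ℕ, 1 ≤ k → k ≤ N → q ^ (h₁ - l₁ + (k : ℝ)) ≠ 1) :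
    confEq12 q h₁ h₂ l₁ α₁ lam t₁ t₂ (fun x =>
      x ^ (-α₁) * ∑ n ∈ Finset.range (N + 1),
        qPoch q (q ^ (h₁ + 1/2) * t₁ / x) n * qPoch q (q ^ (lam + α₁)) n * q ^ n *
          ∑ k ∈ Finset.range (n + 1),
            q ^ ((k : ℝ) ^ 2) * (q ^ (lam + α₁ + h₁ - h₂) * t₁ / t₂) ^ k /
              (qPoch q (q ^ (h₁ - l₁ + 1)) k * qPoch q q k * qPoch q q (n - k))) := by
  intro x hx
  set y := q ^ (h₁ + 1/2) * t₁ / x with hy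
  set c := q ^ (lam + α₁) with hc
  set C := q ^ (h₁ - l₁) with hCdef
  set β := q ^ (h₂ - h₁) * t₂ / t₁ with hβ
  have hq0 := hq.ne'
  have hx0 := hx.ne'
  have hc0 : c ≠ 0 := (Real.rpow_pos_of_pos hq _).ne'
  have hβ0 : β ≠ 0 := div_ne_zero (mul_ne_zero (Real.rpow_pos_of_pos hq _).ne' ht₂) ht₁
  have hC : ∀ k, k < N → 1 - C * q ^ (k + 1) ≠ 0 := by
    intro k hk h
    apply hden (k + 1) (by omega) (by omega)
    rw [Real.rpow_add hq, Real.rpow_natCast]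
    linarith
  have hcN : c * q ^ N = 1 := by
    rw [hc, ← Real.rpow_natCast q N, ← Real.rpow_add hq, hNlam]; simp
  have hz : q ^ (lam + α₁ + h₁ - h₂) * t₁ / t₂ = c / β := by
    have : q ^ (lam + α₁ + h₁ - h₂) = c * (q ^ (h₂ - h₁))⁻¹ := by
      rw [← Real.rpow_neg hq.le, hc, ← Real.rpow_add hq]; congr 1; ring
    have := (Real.rpow_pos_of_pos hq (h₂ - h₁)).ne'
    rw [‹q ^ (lam + α₁ + h₁ - h₂) = _›, hβ]
    field_simp
  have hCq : q ^ (h₁ - l₁ + 1) = C * q := by rw [Real.rpow_add hq, Real.rpow_one]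
  have hinner : ∀ n, ∑ k ∈ Finset.range (n + 1),
      q ^ ((k : ℝ) ^ 2) * (q ^ (lam + α₁ + h₁ - h₂) * t₁ / t₂) ^ k /
        (qPoch q (q ^ (h₁ - l₁ + 1)) k * qPoch q q k * qPoch q q (n - k)) = aC q C (c / β) n := by
    intro n
    unfold aC fC
    apply Finset.sum_congr rfl
    intro k _
    rw [hz, hCq, ← Real.rpow_natCast q (k ^ 2)]
    push_cast
    rw [div_mul_eq_div_div, div_eq_mul_inv _ (qPoch q q (n - k))]
  have hS : ∀ w, ∑ n ∈ Finset.range (N + 1),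
        qPoch q w n * qPoch q c n * q ^ n *
          ∑ k ∈ Finset.range (n + 1),
            q ^ ((k : ℝ) ^ 2) * (q ^ (lam + α₁ + h₁ - h₂) * t₁ / t₂) ^ k /
              (qPoch q (q ^ (h₁ - l₁ + 1)) k * qPoch q q k * qPoch q q (n - k))
      = ∑ n ∈ Finset.range (N + 1), bC q C c (c / β) n * qPoch q w n := by
    intro w
    apply Finset.sum_congr rfl
    intro n _
    rw [hinner, bC]; ring
  have hfull := full_sum q β C c y N hN hq hq1 hc0 hβ0 hC hcN
  have hlin : Lop q β C c y (∑ n ∈ Finset.range (N + 1), bC q C c (c / β) n * qPoch q (y / q) n)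
      (∑ n ∈ Finset.range (N + 1), bC q C c (c / β) n * qPoch q (y * q) n)
      (∑ n ∈ Finset.range (N + 1), bC q C c (c / β) n * qPoch q y n) = 0 := by
    rw [← hfull]
    unfold Lop
    rw [Finset.mul_sum, Finset.mul_sum, Finset.mul_sum, ← Finset.sum_add_distrib,
      ← Finset.sum_sub_distrib]
    apply Finset.sum_congr rfl
    intro n _
    ring
  simp only [hS]
  have ey1 : q ^ (h₁ + 1/2) * t₁ / (q * x) = y / q := by rw [hy]; field_simp
  have ey2 : q ^ (h₁ + 1/2) * t₁ / (x / q) = y * q := by rw [hy]; field_simp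
  rw [ey1, ey2, ← hy]
  generalize (∑ n ∈ Finset.range (N + 1), bC q C c (c / β) n * qPoch q (y / q) n) = F1 at *
  generalize (∑ n ∈ Finset.range (N + 1), bC q C c (c / β) n * qPoch q (y * q) n) = F2 at *
  generalize (∑ n ∈ Finset.range (N + 1), bC q C c (c / β) n * qPoch q y n) = F0 at *
  rw [Real.mul_rpow hq.le hx.le, Real.div_rpow hx.le hq.le]
  clear hS hinner hfull
  -- basic quantities
  obtain ⟨s, hs⟩ : ∃ s, s = q ^ (1 / 2 : ℝ) := ⟨_, rfl⟩
  obtain ⟨H1, hH1⟩ : ∃ s, s = q ^ h₁ := ⟨_, rfl⟩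
  obtain ⟨H2, hH2⟩ : ∃ s, s = q ^ h₂ := ⟨_, rfl⟩
  obtain ⟨L1, hL1⟩ : ∃ s, s = q ^ l₁ := ⟨_, rfl⟩
  obtain ⟨A, hA⟩ : ∃ s, s = q ^ α₁ := ⟨_, rfl⟩
  obtain ⟨L, hL⟩ : ∃ s, s = q ^ lam := ⟨_, rfl⟩
  have s0 : s ≠ 0 := hs ▸ (Real.rpow_pos_of_pos hq _).ne'
  have H10 : H1 ≠ 0 := hH1 ▸ (Real.rpow_pos_of_pos hq _).ne'
  have H20 : H2 ≠ 0 := hH2 ▸ (Real.rpow_pos_of_pos hq _).ne'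
  have L10 : L1 ≠ 0 := hL1 ▸ (Real.rpow_pos_of_pos hq _).ne'
  have A0 : A ≠ 0 := hA ▸ (Real.rpow_pos_of_pos hq _).ne'
  have L0 : L ≠ 0 := hL ▸ (Real.rpow_pos_of_pos hq _).ne'
  have hss : q = s ^ 2 := by
    rw [hs, ← Real.rpow_natCast, ← Real.rpow_mul hq.le]; norm_num
  have cc : c = L * A := by rw [hc, Real.rpow_add hq, hL, hA]
  have cC : C = H1 / L1 := by rw [hCdef, Real.rpow_sub hq, hH1, hL1]
  have cβ : β = H2 / H1 * t₂ / t₁ := by rw [hβ, Real.rpow_sub hq, hH1, hH2]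
  have cy : y = H1 * s * t₁ / x := by rw [hy, Real.rpow_add hq, hH1, hs]
  have e1 : q ^ (h₁ + h₂ - l₁ - 2 * lam + 1/2) = H1 * H2 / L1 / L ^ 2 * s := by
    rw [Real.rpow_add hq, Real.rpow_sub hq, Real.rpow_sub hq, Real.rpow_add hq, two_mul,
      Real.rpow_add hq, ← hH1, ← hH2, ← hL1, ← hL, ← hs]; ring
  have e2 : q ^ (l₁ - 1/2) = L1 / s := by rw [Real.rpow_sub hq, ← hL1, ← hs]
  have e3 : q ^ (h₁ + 1/2) = H1 * s := by rw [Real.rpow_add hq, ← hH1, ← hs]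
  have e4 : q ^ (h₂ + 1/2) = H2 * s := by rw [Real.rpow_add hq, ← hH2, ← hs]
  have e5 : q ^ (h₁ + h₂ - lam + 1/2) = H1 * H2 / L * s := by
    rw [Real.rpow_add hq, Real.rpow_sub hq, Real.rpow_add hq, ← hH1, ← hH2, ← hL, ← hs]
  have e6 : q ^ (h₁ + h₂ - lam) = H1 * H2 / L := by
    rw [Real.rpow_sub hq, Real.rpow_add hq, ← hH1, ← hH2, ← hL]
  have e7 : q ^ (-α₁) = A⁻¹ := by rw [Real.rpow_neg hq.le, ← hA]
  have e8 : q ^ (-h₂) = H2⁻¹ := by rw [Real.rpow_neg hq.le, ← hH2]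
  have e9 : q ^ (-h₁) = H1⁻¹ := by rw [Real.rpow_neg hq.le, ← hH1]
  have e10 : q ^ (-l₁) = L1⁻¹ := by rw [Real.rpow_neg hq.le, ← hL1]
  rw [e1, e2, e3, e4, e5, e6, e7, e8, e9, e10, ← hA]
  rw [cc, cC, cβ, cy] at hlin
  clear_value y c C β
  generalize x ^ (-α₁) = X
  clear e1 e2 e3 e4 e5 e6 e7 e8 e9 e10 hA hL hL1 hH1 hH2 hs hden hC hcN hz hCq
  have fin := congrArg (fun t => A * x ^ 2 * X * t) hlin
  simp only [mul_zero] at fin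
  rw [← fin]
  unfold Lop
  rw [hss]
  field_simp
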